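/- arXiv:1809.00142 — 2 statements merged into one kernel-verified Lean document; each statement's English description precedes it below -/
import Mathlib

section
/- Let (k,d) ∈ ℕ² with k ≥ d ≥ 1, and let C⃗(k,d) be the circulant digraph on vertex set ℤ/kℤ in which each vertex i has exactly the outgoing arcs (i, i+d), (i, i+d+1), …, (i, i+k−1) (indices mod k). Then χ⃗_f(C⃗(k,d)) = χ⃗*(C⃗(k,d)) = χ⃗_c(C⃗(k,d)) = k/d. -/
/-!
The three equalities rest on two facts about the circulant digraph. An acyclic vertex set has at
most `d` elements: a vertex `u` of a set `A` with no out-neighbour in `A` forces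
`A ⊆ {u, u+1, …, u+d-1}`, and a nonempty finite set in which every vertex has an out-neighbour
contains a dicycle (`not_acyclicOn_of_forall_exists`). Conversely every cyclic interval of length
`d` is acyclic, since its internal arcs all run backwards.

Double counting over the vertices turns the first fact into the lower bound `k/d` for every
fractional cover. The continuous version, integrating over all translates of an arc of length
just below `1` in the circle `ℝ/pℤ`, gives `k ≤ d p` for every acyclic `p`-colouring. A weak
circular `p`-colouring is an acyclic `p`-colouring (`IsWeakCircularColouring.isAcyclicColouring`):
inside an open unit arc the colour can only go backwards along arcs, so a dicycle there is
monochromatic. For the upper bounds, the `k` cyclic intervals with weight `1/d` form a fractional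
cover, and `i ↦ i/d` is a weak circular `k/d`-colouring.
-/

open Finset

variable {V : Type*}

/-- `v :: l` forms a directed cycle of the digraph with arc relation `E`:
the vertices are pairwise distinct and each one has an arc to the next, cyclically. -/
def IsDicycle (E : V → V → Prop) (v : V) (l : List V) : Prop :=
  (v :: l).Nodup ∧ List.Chain E v (l ++ [v])

/-- The vertex set `A` induces an acyclic subdigraph of the digraph `E`:
no directed cycle of `E` has all of its vertices in `A`. -/
def AcyclicOn (E : V → V → Prop) (A : Set V) : Prop :=
  ∀ v l, IsDicycle E v l → ¬ (∀ x ∈ v :: l, x ∈ A)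

/-- The open arc of length 1 in `ℝ/pℤ` starting at (the image of) `a`. -/
def unitArc (p a : ℝ) : Set (AddCircle p) :=
  (fun x : ℝ => (x : AddCircle p)) '' Set.Ioo a (a + 1)

/-- An acyclic `p`-colouring of the digraph `E` : the preimage of every open arc
of length 1 induces an acyclic subdigraph. -/
def IsAcyclicColouring (E : V → V → Prop) (p : ℝ) (c : V → AddCircle p) : Prop :=
  ∀ a : ℝ, AcyclicOn E (c ⁻¹' unitArc p a)

/-- The star dichromatic number of a digraph. -/
noncomputable def starDichromatic (E : V → V → Prop) : ℝ :=
  sInf {p : ℝ | 1 ≤ p ∧ ∃ c : V → AddCircle p, IsAcyclicColouring E p c}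

/-- A weak circular `p`-colouring in the sense of Bokal et al. -/
def IsWeakCircularColouring (E : V → V → Prop) (p : ℝ) (c : V → AddCircle p) : Prop :=
  (∀ u w, E u w → c u = c w ∨
    ∃ r : ℝ, r ∈ Set.Ico (0 : ℝ) p ∧ (r : AddCircle p) = c w - c u ∧ 1 ≤ r) ∧
  ∀ t : AddCircle p, AcyclicOn E (c ⁻¹' {t})

/-- The circular dichromatic number of a digraph. -/
noncomputable def circularDichromatic (E : V → V → Prop) : ℝ :=
  sInf {p : ℝ | 1 ≤ p ∧ ∃ c : V → AddCircle p, IsWeakCircularColouring E p c}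

/-- The fractional dichromatic number: the optimal value of the covering linear
program over the acyclic vertex subsets. -/
noncomputable def fracDichromatic [Fintype V] [DecidableEq V] (E : V → V → Prop) : ℝ :=
  sInf {r : ℝ | ∃ x : Finset V → ℝ, (∀ A, 0 ≤ x A) ∧
    (∀ A : Finset V, x A ≠ 0 → AcyclicOn E ↑A) ∧
    (∀ v : V, 1 ≤ ∑ A ∈ Finset.univ.filter (fun A : Finset V => v ∈ A), x A) ∧
    r = ∑ A : Finset V, x A}

/-- The cyclic interval `{i, i+1, ..., i+d-1}` in `ℤ/kℤ`. -/
def cycInterval (k : ℕ) (i : ZMod k) (d : ℕ) : Set (ZMod k) :=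
  {j : ZMod k | ∃ t : ℕ, t < d ∧ j = i + (t : ZMod k)}

/-- An acyclic `(k,d)`-colouring of the digraph `E`. -/
def IsAcyclicKDColouring (E : V → V → Prop) (k d : ℕ) (c : V → ZMod k) : Prop :=
  ∀ i : ZMod k, AcyclicOn E (c ⁻¹' cycInterval k i d)

/-- The dichromatic number: the least `k` such that the vertex set can be partitioned
into `k` classes each inducing an acyclic subdigraph. -/
noncomputable def dichromatic (E : V → V → Prop) : ℕ :=
  sInf {k : ℕ | ∃ c : V → Fin k, ∀ i : Fin k, AcyclicOn E (c ⁻¹' {i})}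

/-- `v :: l` forms a cycle of the simple graph `G` (of length at least 3). -/
def IsGraphCycle (G : SimpleGraph V) (v : V) (l : List V) : Prop :=
  3 ≤ (v :: l).length ∧ (v :: l).Nodup ∧ List.Chain G.Adj v (l ++ [v])

/-- The vertex set `A` induces a forest (acyclic subgraph) in the simple graph `G`. -/
def ForestOn (G : SimpleGraph V) (A : Set V) : Prop :=
  ∀ v l, IsGraphCycle G v l → ¬ (∀ x ∈ v :: l, x ∈ A)

/-- A `(k,d)`-tree-colouring of a graph. -/
def IsTreeColouring (G : SimpleGraph V) (k d : ℕ) (c : V → ZMod k) : Prop :=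
  ∀ i : ZMod k, ForestOn G (c ⁻¹' cycInterval k i d)

/-- The circular vertex arboricity of a graph. -/
noncomputable def circularVertexArboricity (G : SimpleGraph V) : ℝ :=
  sInf {r : ℝ | ∃ k d : ℕ, 1 ≤ d ∧ d ≤ k ∧
    (∃ c : V → ZMod k, IsTreeColouring G k d c) ∧ r = (k : ℝ) / d}

/-- `E` is an orientation of the simple graph `G`: for each edge exactly one of the
two possible arcs is present, and there are no other arcs. -/
def IsOrientation (G : SimpleGraph V) (E : V → V → Prop) : Prop :=
  ∀ u w, ((E u w ∨ E w u) ↔ G.Adj u w) ∧ ¬ (E u w ∧ E w u)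

/-- The star dichromatic number of a graph: the maximum over all orientations. -/
noncomputable def starDichromaticGraph (G : SimpleGraph V) : ℝ :=
  sSup {r : ℝ | ∃ E : V → V → Prop, IsOrientation G E ∧ r = starDichromatic E}

/-- The fractional dichromatic number of a graph: the maximum over all orientations. -/
noncomputable def fracDichromaticGraph [Fintype V] [DecidableEq V] (G : SimpleGraph V) : ℝ :=
  sSup {r : ℝ | ∃ E : V → V → Prop, IsOrientation G E ∧ r = fracDichromatic E}

/-- The fractional chromatic number of a graph: the optimal value of the covering
linear program over the independent vertex subsets. -/
noncomputable def fractionalChromatic [Fintype V] [DecidableEq V] (G : SimpleGraph V) : ℝ :=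
  sInf {r : ℝ | ∃ x : Finset V → ℝ, (∀ A, 0 ≤ x A) ∧
    (∀ A : Finset V, x A ≠ 0 → ∀ u ∈ A, ∀ w ∈ A, ¬ G.Adj u w) ∧
    (∀ v : V, 1 ≤ ∑ A ∈ Finset.univ.filter (fun A : Finset V => v ∈ A), x A) ∧
    r = ∑ A : Finset V, x A}

/-- A `(k,d)`-colouring of a graph in the sense of Vince: colours of adjacent vertices
have circular `k`-distance at least `d`. -/
def IsVinceColouring (G : SimpleGraph V) (k d : ℕ) (c : V → ZMod k) : Prop :=
  ∀ u w, G.Adj u w → d ≤ (c u - c w).val ∧ d ≤ (c w - c u).val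

/-- Vince's star (circular) chromatic number of a graph. -/
noncomputable def starChromatic (G : SimpleGraph V) : ℝ :=
  sInf {r : ℝ | ∃ k d : ℕ, 1 ≤ d ∧ d ≤ k ∧
    (∃ c : V → ZMod k, IsVinceColouring G k d c) ∧ r = (k : ℝ) / d}

/-- The circulant digraph `C⃗(k,d)` on `ℤ/kℤ`: each vertex `i` has the outgoing arcs
`(i, i+d), (i, i+d+1), …, (i, i+k-1)`. -/
def circulantDigraph (k d : ℕ) : ZMod k → ZMod k → Prop :=
  fun i j => ∃ t : ℕ, d ≤ t ∧ t < k ∧ j = i + (t : ZMod k)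

/-- The directed cycle `C⃗_n` on `ℤ/nℤ`. -/
def dirCycle (n : ℕ) : ZMod n → ZMod n → Prop :=
  fun i j => j = i + 1

/-- The digraph `D^s` obtained from `D` by adding a dominating source `none`. -/
def addSource (E : V → V → Prop) : Option V → Option V → Prop :=
  fun a b => match a, b with
  | none, some _ => True
  | some u, some w => E u w
  | _, none => False

/-- The wheel graph `W_k`: a cycle on `ℤ/kℤ` together with a hub `none` adjacent to
every cycle vertex. -/
def wheelGraph (k : ℕ) : SimpleGraph (Option (ZMod k)) :=
  SimpleGraph.fromRel (fun a b => match a, b with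
    | none, some _ => True
    | some i, some j => j = i + 1
    | _, none => False)

/-! ### Dicycles and acyclic sets -/

/-- A real function that does not increase along the arcs of a dicycle is constant on it. -/
lemma IsDicycle.potential_eq {E : V → V → Prop} {v : V} {l : List V} (h : IsDicycle E v l)
    (f : V → ℝ) (hf : ∀ u ∈ v :: l, ∀ w ∈ v :: l, E u w → f w ≤ f u) :
    ∀ x ∈ v :: l, f x = f v := by
  have h1 : List.IsChain E (v :: (l ++ [v])) := h.2
  have h2 : List.IsChain (fun u w => f w ≤ f u) (v :: (l ++ [v])) := by
    refine (List.IsChain.imp_of_mem_imp (S := fun u w => f w ≤ f u) ?_ h1)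
    intro a b ha hb hab
    exact hf a (by simp at ha ⊢; tauto) b (by simp at hb ⊢; tauto) hab
  have : IsTrans V (fun u w => f w ≤ f u) := ⟨fun _ _ _ h1 h2 => h2.trans h1⟩
  have h3 := List.isChain_iff_pairwise.1 h2
  rw [List.pairwise_cons, List.pairwise_append] at h3
  intro x hx
  rcases List.mem_cons.1 hx with rfl | hx
  · rfl
  · exact le_antisymm (h3.1 x (by simp [hx])) (h3.2.2.2 x hx v (by simp))

lemma acyclicOn_of_potential {E : V → V → Prop} {A : Set V} (f : V → ℝ)
    (hf : ∀ u ∈ A, ∀ w ∈ A, E u w → f w < f u) : AcyclicOn E A := by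
  intro v l h hA
  have h1 := h.potential_eq f fun u hu w hw huw => (hf u (hA u hu) w (hA w hw) huw).le
  have h2 : List.IsChain E (v :: (l ++ [v])) := h.2
  cases l with
  | nil =>
    have : E v v := by simpa using h2
    exact lt_irrefl _ (hf v (hA v (by simp)) v (hA v (by simp)) this)
  | cons w l =>
    have : E v w := by
      simp only [List.cons_append, List.isChain_cons_cons] at h2
      exact h2.1
    exact (hf v (hA v (by simp)) w (hA w (by simp)) this).ne (h1 w (by simp))

/-- Following out-neighbours inside a finite set eventually closes up a dicycle. -/
lemma not_acyclicOn_of_forall_exists {E : V → V → Prop} {A : Finset V} (hne : A.Nonempty)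
    (h : ∀ u ∈ A, ∃ w ∈ A, E u w) : ¬ AcyclicOn E (A : Set V) := by
  intro hA
  have h' : ∀ u : A, ∃ w : A, E u w := fun u => by
    obtain ⟨w, hw, hE⟩ := h u u.2
    exact ⟨⟨w, hw⟩, hE⟩
  choose f hf using h'
  obtain ⟨a, ha⟩ := hne
  obtain ⟨m, n, hmn, heq⟩ := Finite.exists_ne_map_eq_of_infinite (fun n => f^[n] ⟨a, ha⟩)
  wlog hlt : m < n generalizing m n
  · exact this n m hmn.symm heq.symm (by omega)
  set y := f^[m] ⟨a, ha⟩ with hy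
  have hper : Function.IsPeriodicPt f (n - m) y := by
    have : f^[n - m] y = f^[n - m + m] ⟨a, ha⟩ := by rw [Function.iterate_add_apply]
    rw [Function.IsPeriodicPt, Function.IsFixedPt, this, Nat.sub_add_cancel hlt.le]
    exact heq.symm
  have hpos : 0 < Function.minimalPeriod f y := hper.minimalPeriod_pos (by omega)
  have hch : (Function.periodicOrbit f y).Chain (fun u w : A => E u w) := by
    rw [Function.periodicOrbit_chain]
    intro i _
    rw [Function.iterate_succ_apply']
    exact hf _
  have hnd := Function.nodup_periodicOrbit (f := f) (x := y)
  obtain ⟨N, hN⟩ := Nat.exists_eq_succ_of_ne_zero hpos.ne'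
  rw [Function.periodicOrbit, hN, Nat.succ_eq_add_one, List.range_succ_eq_map, List.map_cons]
    at hch hnd
  rw [Cycle.chain_coe_cons] at hch
  rw [Cycle.nodup_coe_iff] at hnd
  set l := List.map (fun n => f^[n] y) (List.map Nat.succ (List.range N))
  refine hA y (l.map Subtype.val) ⟨?_, ?_⟩ ?_
  · have := hnd.map Subtype.val_injective
    simpa using this
  · have := (List.isChain_map (R := E) (Subtype.val : A → V)).2 hch
    simpa [List.Chain] using this
  · intro x hx
    have : x ∈ List.map Subtype.val (y :: l) := by simpa using hx
    obtain ⟨z, -, rfl⟩ := List.mem_map.1 this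
    exact z.2

/-! ### Acyclic sets of the circulant digraph -/

lemma card_le_of_acyclicOn_circulant {k d : ℕ} [NeZero k] {A : Finset (ZMod k)}
    (hA : AcyclicOn (circulantDigraph k d) (A : Set (ZMod k))) : A.card ≤ d := by
  by_contra! hlt
  refine not_acyclicOn_of_forall_exists (card_pos.1 (by omega)) ?_ hA
  intro u _
  by_contra! hu
  have hsub : A ⊆ (range d).image (fun t : ℕ => u + (t : ZMod k)) := by
    intro w hw
    have hval : w = u + ((w - u).val : ZMod k) := by simp
    refine mem_image.2 ⟨(w - u).val, mem_range.2 ?_, hval.symm⟩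
    by_contra! hle
    exact hu w hw ⟨(w - u).val, hle, ZMod.val_lt _, hval⟩
  have := (card_le_card hsub).trans card_image_le
  rw [card_range] at this
  omega

/-- Measured by the offset from `i`, every arc inside the interval goes backwards: a forward jump
would have length below `d`. -/
lemma acyclicOn_interval (k d : ℕ) [NeZero k] (i : ZMod k) :
    AcyclicOn (circulantDigraph k d) {j | (j - i).val < d} := by
  refine acyclicOn_of_potential (fun j => ((j - i).val : ℝ)) ?_
  rintro u hu w hw ⟨t, hdt, htk, rfl⟩
  simp only [Set.mem_ofPred_eq] at hu hw
  have h1 : u + (t : ZMod k) - i = (u - i) + (t : ZMod k) := by ring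
  rw [h1] at hw ⊢
  have h2 : ((u - i) + (t : ZMod k)).val = ((u - i).val + t) % k := by
    rw [ZMod.val_add, ZMod.val_natCast, Nat.add_mod_mod]
  rw [h2] at hw ⊢
  rcases lt_or_ge ((u - i).val + t) k with h3 | h3
  · rw [Nat.mod_eq_of_lt h3] at hw
    omega
  · rw [Nat.mod_eq_sub_mod h3, Nat.mod_eq_of_lt (by omega)]
    exact_mod_cast (by omega : (u - i).val + t - k < (u - i).val)

lemma card_val_lt {k d : ℕ} [NeZero k] (hdk : d ≤ k) :
    (univ.filter fun z : ZMod k => z.val < d).card = d := by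
  have : (univ.filter fun z : ZMod k => z.val < d).image ZMod.val = range d := by
    ext t
    simp only [mem_image, mem_filter, mem_univ, true_and, mem_range]
    constructor
    · rintro ⟨z, hz, rfl⟩
      exact hz
    · intro ht
      have : ((t : ZMod k)).val = t := ZMod.val_cast_of_lt (by omega)
      exact ⟨t, by rw [this]; exact ht, this⟩
  rw [← card_image_of_injective _ (ZMod.val_injective k), this, card_range]

/-! ### The fractional dichromatic number -/

lemma fracDichromatic_circulant (k d : ℕ) [NeZero k] (hd : 1 ≤ d) (hdk : d ≤ k) :
    fracDichromatic (circulantDigraph k d) = (k : ℝ) / d := by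
  have hd0 : (0 : ℝ) < d := by exact_mod_cast hd
  refine IsLeast.csInf_eq ⟨?_, ?_⟩
  · let J : ZMod k → Finset (ZMod k) := fun i => univ.filter fun j => (j - i).val < d
    -- The weight of `A` is the number of `i` whose interval is `A`, divided by `d`: the
    -- intervals are counted with multiplicity because they all coincide when `d = k`.
    refine ⟨fun A => ∑ i : ZMod k, if J i = A then (1 : ℝ) / d else 0, ?_, ?_, ?_, ?_⟩
    · intro A
      positivity
    · intro A hA
      obtain ⟨i, -, hi⟩ := exists_ne_zero_of_sum_ne_zero hA
      have hi : J i = A := by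
        by_contra hne
        simp [hne] at hi
      rw [← hi]
      simpa [J] using acyclicOn_interval k d i
    · intro v
      rw [sum_comm]
      have h1 : ∀ i : ZMod k, (∑ A ∈ univ.filter (fun A : Finset (ZMod k) => v ∈ A),
          if J i = A then (1 : ℝ) / d else 0) = if (v - i).val < d then (1 : ℝ) / d else 0 := by
        intro i
        rw [sum_ite_eq]
        simp [J]
      have h2 := Equiv.sum_comp (Equiv.subLeft v)
        (fun z : ZMod k => if z.val < d then (1 : ℝ) / d else 0)
      simp only [Equiv.subLeft_apply] at h2
      rw [sum_congr rfl fun i _ => h1 i, h2, ← sum_filter, sum_const, card_val_lt hdk, nsmul_eq_mul]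
      rw [mul_one_div_cancel hd0.ne']
    · rw [sum_comm]
      simp [div_eq_mul_inv, ZMod.card]
  · rintro r ⟨x, hx0, hxA, hxv, rfl⟩
    rw [div_le_iff₀ hd0]
    calc (k : ℝ) = ∑ v : ZMod k, (1 : ℝ) := by simp [ZMod.card]
      _ ≤ ∑ v : ZMod k, ∑ A ∈ univ.filter (fun A : Finset (ZMod k) => v ∈ A), x A :=
        sum_le_sum fun v _ => hxv v
      _ = ∑ A : Finset (ZMod k), (A.card : ℝ) * x A := by
        simp_rw [sum_filter]
        rw [sum_comm]
        refine sum_congr rfl fun A _ => ?_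
        simp
      _ ≤ ∑ A : Finset (ZMod k), (d : ℝ) * x A := by
        refine sum_le_sum fun A _ => ?_
        by_cases h : x A = 0
        · simp [h]
        · exact mul_le_mul_of_nonneg_right
            (by exact_mod_cast card_le_of_acyclicOn_circulant (hxA A h)) (hx0 A)
      _ = (∑ A : Finset (ZMod k), x A) * d := by rw [← mul_sum, mul_comm]

/-! ### The star and circular dichromatic numbers -/

/-- A closed arc of length `2 r < 1` centred at `a` lies in the open unit arc with the same
centre. -/
lemma closedBall_subset_unitArc {p r : ℝ} (hr : r < 1 / 2) (a : ℝ) :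
    Metric.closedBall (a : AddCircle p) r ⊆ unitArc p (a - 1 / 2) := by
  intro z hz
  induction z using QuotientAddGroup.induction_on with
  | H b =>
    rw [Metric.mem_closedBall, dist_eq_norm] at hz
    have h1 : ((b : AddCircle p) - (a : AddCircle p)) = ((b - a : ℝ) : AddCircle p) := by
      rfl
    have h2 : ‖((b - a : ℝ) : AddCircle p)‖ ≤ r := by rw [← h1]; exact hz
    rw [AddCircle.norm_eq] at h2
    obtain ⟨h3, h4⟩ := abs_le.1 h2
    refine ⟨b - round (p⁻¹ * (b - a)) * p, ⟨by linarith, by linarith⟩, ?_⟩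
    have : ((round (p⁻¹ * (b - a)) * p : ℝ) : AddCircle p) = 0 := by
      rw [← zsmul_eq_mul]
      exact (AddCircle.coe_eq_zero_iff p).2 ⟨_, rfl⟩
    simp only [AddCircle.coe_sub, this, sub_zero]

/-- Integrating over `a` the number of vertices coloured within distance `r` of `a`, for every
`r < 1/2`. -/
lemma le_of_isAcyclicColouring {k d : ℕ} [NeZero k] {p : ℝ} (hp : 1 ≤ p)
    {c : ZMod k → AddCircle p} (hc : IsAcyclicColouring (circulantDigraph k d) p c) :
    (k : ℝ) ≤ d * p := by
  have : Fact (0 < p) := ⟨by linarith⟩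
  have key : ∀ r : ℝ, 0 ≤ r → r < 1 / 2 → (k : ℝ) * (2 * r) ≤ d * p := by
    intro r hr0 hr
    have hcount : ∀ a : AddCircle p, (∑ v : ZMod k,
        (Metric.closedBall (c v) r).indicator (fun _ => (1 : ENNReal)) a) ≤ d := by
      intro a
      induction a using QuotientAddGroup.induction_on with
      | H b =>
        classical
        have hA : AcyclicOn (circulantDigraph k d)
            ((univ.filter fun v => (b : AddCircle p) ∈ Metric.closedBall (c v) r :
              Finset (ZMod k)) : Set (ZMod k)) := by
          intro v l h hmem
          refine hc (b - 1 / 2) v l h fun x hx => closedBall_subset_unitArc hr b ?_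
          have := hmem x hx
          rw [mem_coe, mem_filter] at this
          exact Metric.mem_closedBall_comm.1 this.2
        have := card_le_of_acyclicOn_circulant hA
        simp only [Set.indicator_apply, sum_boole]
        exact_mod_cast this
    have hint : ((k : ENNReal) * ENNReal.ofReal (2 * r)) ≤ d * ENNReal.ofReal p := by
      calc (k : ENNReal) * ENNReal.ofReal (2 * r)
          = ∑ v : ZMod k, MeasureTheory.volume (Metric.closedBall (c v) r) := by
            simp [AddCircle.volume_closedBall, min_eq_right (by linarith : 2 * r ≤ p), ZMod.card]
        _ = ∫⁻ a, ∑ v : ZMod k,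
              (Metric.closedBall (c v) r).indicator (fun _ => (1 : ENNReal)) a := by
            rw [MeasureTheory.lintegral_finsetSum]
            · refine sum_congr rfl fun v _ => ?_
              rw [MeasureTheory.lintegral_indicator Metric.isClosed_closedBall.measurableSet]
              simp
            · intro v _
              exact measurable_const.indicator Metric.isClosed_closedBall.measurableSet
        _ ≤ ∫⁻ _ : AddCircle p, (d : ENNReal) := MeasureTheory.lintegral_mono hcount
        _ = d * ENNReal.ofReal p := by
            rw [MeasureTheory.lintegral_const, AddCircle.measure_univ]
    have h := ENNReal.toReal_mono (by finiteness) hint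
    simpa [ENNReal.toReal_mul, ENNReal.toReal_ofReal (by linarith : 0 ≤ p), hr0] using h
  by_contra! hlt
  have hk : (0 : ℝ) < k := lt_of_le_of_lt (by positivity) hlt
  -- The radius used below is the midpoint of `d p / (2 k)` and `1 / 2`.
  have hq : d * p / k < 1 := (div_lt_one hk).2 hlt
  have hq0 : 0 ≤ d * p / k := by positivity
  have := key ((d * p / k + 1) / 4) (by linarith) (by linarith)
  have h2 : d * p / k * k = d * p := div_mul_cancel₀ _ hk.ne'
  nlinarith

lemma IsWeakCircularColouring.isAcyclicColouring {E : V → V → Prop} {p : ℝ} (hp : 1 ≤ p)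
    {c : V → AddCircle p} (hc : IsWeakCircularColouring E p c) : IsAcyclicColouring E p c := by
  classical
  intro a v l h hmem
  -- `g` lifts the colours met on the dicycle to the real interval `(a, a + 1)`.
  have hex : ∀ x, ∃ y : ℝ, x ∈ v :: l → y ∈ Set.Ioo a (a + 1) ∧ (y : AddCircle p) = c x := by
    intro x
    by_cases hx : x ∈ v :: l
    · obtain ⟨y, hy, hyc⟩ := hmem x hx
      exact ⟨y, fun _ => ⟨hy, hyc⟩⟩
    · exact ⟨0, fun h => absurd h hx⟩
  choose g hg using hex
  have hfact : Fact (0 < p) := ⟨by linarith⟩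
  have hinj : ∀ x y : ℝ, x ∈ Set.Ico 0 p → y ∈ Set.Ico 0 p →
      (x : AddCircle p) = y → x = y := by
    intro x y hx hy hxy
    exact (AddCircle.coe_eq_coe_iff_of_mem_Ico (a := 0) (by simpa using hx)
      (by simpa using hy)).1 hxy
  have hmono : ∀ u ∈ v :: l, ∀ w ∈ v :: l, E u w → g w ≤ g u := by
    intro u hu w hw huw
    obtain ⟨⟨hu1, hu2⟩, hu3⟩ := hg u hu
    obtain ⟨⟨hw1, hw2⟩, hw3⟩ := hg w hw
    by_contra! hlt
    have hdiff : ((g w - g u : ℝ) : AddCircle p) = c w - c u := by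
      rw [AddCircle.coe_sub, hu3, hw3]
    have hI : g w - g u ∈ Set.Ico 0 p := ⟨by linarith, by linarith⟩
    rcases hc.1 u w huw with heq | ⟨r, hr, hrc, hr1⟩
    · have := hinj _ 0 hI ⟨le_rfl, by linarith⟩ (by rw [hdiff, heq, sub_self]; rfl)
      linarith
    · have := hinj _ r hI hr (by rw [hdiff, hrc])
      linarith
  have hconst := h.potential_eq g hmono
  refine hc.2 (c v) v l h fun x hx => ?_
  rw [Set.mem_preimage, Set.mem_singleton_iff, ← (hg x hx).2, hconst x hx,
    (hg v (by simp)).2]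

/-- The colouring is `i ↦ i/d`. It is injective, so its fibres are acyclic because the digraph
has no loops. -/
lemma exists_isWeakCircularColouring (k d : ℕ) [NeZero k] (hd : 1 ≤ d) (hdk : d ≤ k) :
    ∃ c : ZMod k → AddCircle ((k : ℝ) / d),
      IsWeakCircularColouring (circulantDigraph k d) ((k : ℝ) / d) c := by
  have hd0 : (0 : ℝ) < d := by exact_mod_cast hd
  have hk0 : (0 : ℝ) < k := by exact_mod_cast (by omega : 0 < k)
  have hfact : Fact (0 < (k : ℝ) / d) := ⟨by positivity⟩
  have hI : ∀ t : ℕ, t < k → (t : ℝ) / d ∈ Set.Ico (0 : ℝ) (k / d) := fun t ht =>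
    ⟨by positivity, by gcongr⟩
  refine ⟨fun i => ((i.val / d : ℝ) : AddCircle ((k : ℝ) / d)), ?_, ?_⟩
  · rintro u w ⟨t, hdt, htk, rfl⟩
    right
    refine ⟨t / d, hI t htk, ?_, ?_⟩
    · rw [← AddCircle.coe_sub]
      have h2 : (u + (t : ZMod k)).val = (u.val + t) % k := by
        rw [ZMod.val_add, ZMod.val_natCast, Nat.add_mod_mod]
      rw [h2, ← sub_eq_zero, ← AddCircle.coe_sub, AddCircle.coe_eq_zero_iff]
      refine ⟨((u.val + t) / k : ℕ), ?_⟩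
      have h3 : ((k * ((u.val + t) / k) + (u.val + t) % k : ℕ) : ℝ) = ((u.val + t : ℕ) : ℝ) := by
        rw [Nat.div_add_mod]
      generalize (u.val + t) / k = q at h3 ⊢
      generalize (u.val + t) % k = m at h3 ⊢
      push_cast at h3
      rw [zsmul_eq_mul]
      field_simp
      push_cast
      linarith
    · rw [le_div_iff₀ hd0, one_mul]
      exact_mod_cast hdt
  · intro s
    refine acyclicOn_of_potential (fun _ => 0) ?_
    rintro u hu w hw ⟨t, hdt, htk, hw'⟩
    exfalso
    have heq : ((u.val / d : ℝ) : AddCircle ((k : ℝ) / d)) = (w.val / d : ℝ) := by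
      rw [Set.mem_preimage, Set.mem_singleton_iff] at hu hw
      rw [hu, hw]
    have h1 := (AddCircle.coe_eq_coe_iff_of_mem_Ico (a := 0)
      (by simpa using hI _ (ZMod.val_lt u)) (by simpa using hI _ (ZMod.val_lt w))).1 heq
    have h2 : (u.val : ℝ) = w.val := by
      rwa [div_left_inj' hd0.ne'] at h1
    have h3 : u = w := ZMod.val_injective k (by exact_mod_cast h2)
    rw [h3, left_eq_add, ZMod.natCast_eq_zero_iff] at hw'
    exact absurd (Nat.le_of_dvd (by omega) hw') (by omega)

/-- for the circulant digraph `C⃗(k,d)`,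
`χ⃗_f = χ⃗* = χ⃗_c = k/d`. -/
theorem stmt9 (k d : ℕ) [NeZero k] (hd : 1 ≤ d) (hdk : d ≤ k) :
    fracDichromatic (circulantDigraph k d) = (k : ℝ) / d ∧
    starDichromatic (circulantDigraph k d) = (k : ℝ) / d ∧
    circularDichromatic (circulantDigraph k d) = (k : ℝ) / d := by
  have hd0 : (0 : ℝ) < d := by exact_mod_cast hd
  have h1 : 1 ≤ (k : ℝ) / d := by
    rw [le_div_iff₀ hd0, one_mul]
    exact_mod_cast hdk
  have hlow : ∀ p : ℝ, 1 ≤ p → ∀ c : ZMod k → AddCircle p,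
      IsAcyclicColouring (circulantDigraph k d) p c → (k : ℝ) / d ≤ p := by
    intro p hp c hc
    rw [div_le_iff₀ hd0, mul_comm]
    exact le_of_isAcyclicColouring hp hc
  obtain ⟨c, hc⟩ := exists_isWeakCircularColouring k d hd hdk
  refine ⟨fracDichromatic_circulant k d hd hdk, IsLeast.csInf_eq ⟨?_, ?_⟩,
    IsLeast.csInf_eq ⟨?_, ?_⟩⟩
  · exact ⟨h1, c, hc.isAcyclicColouring h1⟩
  · rintro p ⟨hp, c', hc'⟩
    exact hlow p hp c' hc'
  · exact ⟨h1, c, hc⟩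
  · rintro p ⟨hp, c', hc'⟩
    exact hlow p hp c' (hc'.isAcyclicColouring hp)
end

section
/- Let k ≥ 4 be even and let W_k be the wheel graph consisting of a cycle on k vertices together with one additional hub vertex adjacent to all cycle vertices. Then χ⃗*(W_k) = 5/3 while χ⃗_f(W_k) = (3k−2)/(2k−2), where χ⃗*(W_k) and χ⃗_f(W_k) denote the maxima of the star dichromatic number and the fractional dichromatic number, respectively, over all orientations of W_k. -/
/-!
Directed cycles in an orientation of a wheel are controlled by two kinds of cycles: the vertex set
of every directed cycle contains the hub together with a directed triangle on two consecutive rim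
vertices, or it contains the whole rim, and in that case the rim is itself a directed cycle
(`dicycle_cases`).

*Extremal orientation.* Both maxima are attained by `extremal`: the rim is a directed cycle, and
the hub has arcs to the even rim vertices and from the odd ones. The directed triangles are then
those on the pairs `{i, i+1}` with `i` even, which form a perfect matching of the rim.

*Star dichromatic number.* For the upper bound, colours are taken in `{0, 1/3, 2/3, 1, 4/3}` modulo
`5/3`, with colour `0` at the hub; rim vertices alternate between `1/3` and `1`, and when the rim is
directed one pair of consecutive vertices is recoloured `2/3, 4/3` to break the rim. For the lower
bound, suppose that `p < 5/3`. The two rim vertices of a directed triangle, together with the hub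
colour placed at `0`, leave no circular gap longer than `p - 1`. So all rim colours lie in
`[2 - p, 2 * p - 2]`, of length `3 * p - 4 < 1`, and the whole rim fits into one open unit arc.

*Fractional dichromatic number.* The hub together with the even (or odd) rim vertices, with
weight `1/2` each, and the `k` complements of one vertex in the rim, with weight `1/(2(k-1))` each, form a
fractional cover for every orientation. A dual solution for `extremal` has weight `1/(k-1)` on
rim vertices and `1 - k/(2(k-1))` on the hub: an acyclic set containing the hub meets each
matching pair at most once, and one avoiding the hub misses some rim vertex.
-/

open Finset

variable {V : Type*}

/-! ### Directed cycles in orientations of wheels -/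

/-- The hub and the rim vertices `i`, `i + 1` span a directed triangle, in either direction. -/
def DirTri {k : ℕ} (E : Option (ZMod k) → Option (ZMod k) → Prop) (i : ZMod k) : Prop :=
  (E none (some i) ∧ E (some i) (some (i + 1)) ∧ E (some (i + 1)) none) ∨
  (E none (some (i + 1)) ∧ E (some (i + 1)) (some i) ∧ E (some i) none)

lemma exists_out_of_chain (E : V → V → Prop) (w : V) (l : List V) :
    ∀ v, List.Chain E v (l ++ [w]) → ∀ x ∈ v :: l, ∃ y ∈ l ++ [w], E x y := by
  induction l with
  | nil =>
    intro v h x hx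
    simp only [List.mem_singleton] at hx
    subst hx
    exact ⟨w, by simp, by simpa [List.Chain] using h⟩
  | cons a l ih =>
    intro v h x hx
    have h' : E v a ∧ List.Chain E a (l ++ [w]) := by simpa [List.Chain] using h
    rcases List.mem_cons.1 hx with rfl | hx
    · exact ⟨a, by simp, h'.1⟩
    · obtain ⟨y, hy, hxy⟩ := ih a h'.2 x hx
      exact ⟨y, by simp only [List.cons_append, List.mem_cons]; exact Or.inr hy, hxy⟩

lemma IsDicycle.exists_out {E : V → V → Prop} {v : V} {l : List V} (h : IsDicycle E v l) :
    ∀ x ∈ v :: l, ∃ y ∈ v :: l, E x y := by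
  intro x hx
  obtain ⟨y, hy, hxy⟩ := exists_out_of_chain E v l v h.2 x hx
  refine ⟨y, ?_, hxy⟩
  simp only [List.mem_append, List.mem_cons] at hy ⊢
  tauto

lemma wheel_adj_hub {k : ℕ} (i : ZMod k) : (wheelGraph k).Adj none (some i) := by
  simp [wheelGraph]

lemma wheel_adj_rim {k : ℕ} {i j : ZMod k} :
    (wheelGraph k).Adj (some i) (some j) ↔ i ≠ j ∧ (j = i + 1 ∨ i = j + 1) := by
  simp [wheelGraph]

section Orientation

variable {k : ℕ} {E : Option (ZMod k) → Option (ZMod k) → Prop}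

lemma IsOrientation.asymm {G : SimpleGraph V} {E : V → V → Prop} (hE : IsOrientation G E)
    {u w : V} (h : E u w) : ¬ E w u := fun h' => (hE u w).2 ⟨h, h'⟩

lemma IsOrientation.hub (hE : IsOrientation (wheelGraph k) E) (i : ZMod k) :
    E none (some i) ∨ E (some i) none := (hE _ _).1.2 (wheel_adj_hub i)

lemma IsOrientation.rim (hE : IsOrientation (wheelGraph k) E) {i j : ZMod k}
    (h : E (some i) (some j)) : j = i + 1 ∨ i = j + 1 :=
  (wheel_adj_rim.1 ((hE _ _).1.1 (Or.inl h))).2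

lemma IsOrientation.not_loop (hE : IsOrientation (wheelGraph k) E) {u : Option (ZMod k)} :
    ¬ E u u := fun h => hE.asymm h h

/-- If every vertex of `C` has an out-neighbour in `C` and `C` contains no directed triangle, then
an arc along the rim in direction `d` that starts at an out-neighbour of the hub (if the hub lies
in `C`) propagates around the rim: the out-neighbour of its head can be neither the hub nor the
vertex just left. -/
lemma rim_walk (hE : IsOrientation (wheelGraph k) E) (C : Set (Option (ZMod k)))
    (hout : ∀ x ∈ C, ∃ y ∈ C, E x y)
    (hT : none ∈ C → ∀ i, some i ∈ C → some (i + 1) ∈ C → ¬ DirTri E i)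
    {d : ZMod k} (hd : d = 1 ∨ d = -1) {i : ZMod k} (hi : some i ∈ C) (hid : some (i + d) ∈ C)
    (hh : none ∈ C → E none (some i)) (harc : E (some i) (some (i + d))) (n : ℕ) :
    some (i + n * d) ∈ C ∧ some (i + n * d + d) ∈ C ∧ (none ∈ C → E none (some (i + n * d))) ∧
      E (some (i + n * d)) (some (i + n * d + d)) := by
  induction n with
  | zero => simpa using ⟨hi, hid, hh, harc⟩
  | succ n ih =>
    have e : i + ((n + 1 : ℕ) : ZMod k) * d = i + n * d + d := by push_cast; ring
    rw [e]
    generalize i + (n : ZMod k) * d = j at ih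
    obtain ⟨h1, h2, h3, h4⟩ := ih
    have h5 : none ∈ C → E none (some (j + d)) := by
      intro hn
      refine (hE.hub (j + d)).resolve_right fun hb => ?_
      rcases hd with rfl | rfl
      · exact hT hn j h1 h2 (Or.inl ⟨h3 hn, h4, hb⟩)
      · refine hT hn (j + -1) h2 (by simpa using h1) (Or.inr ?_)
        simpa using ⟨h3 hn, h4, hb⟩
    obtain ⟨y, hy, hEy⟩ := hout _ h2
    rcases y with _ | m
    · exact absurd hEy (hE.asymm (h5 hy))
    · have hmj : m ≠ j := by rintro rfl; exact hE.asymm h4 hEy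
      have hm : m = j + d + d := by
        rcases hd with rfl | rfl
        · rcases hE.rim hEy with h | h
          · exact h
          · exact absurd (add_right_cancel h).symm hmj
        · rcases hE.rim hEy with h | h
          · exact absurd (by simpa using h) hmj
          · rw [h]; ring
      subst hm
      exact ⟨h2, hy, h5, hEy⟩

/-- A directed cycle in an orientation of a wheel contains the vertices of a directed triangle, or
all rim vertices, the rim then being a directed cycle. -/
lemma dicycle_cases [NeZero k] (hE : IsOrientation (wheelGraph k) E) {v : Option (ZMod k)}
    {l : List (Option (ZMod k))} (h : IsDicycle E v l) :
    (none ∈ v :: l ∧ ∃ i, some i ∈ v :: l ∧ some (i + 1) ∈ v :: l ∧ DirTri E i) ∨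
    ((∀ i, some i ∈ v :: l) ∧
      ((∀ i, E (some i) (some (i + 1))) ∨ ∀ i, E (some (i + 1)) (some i))) := by
  have hout := h.exists_out
  by_cases hT : none ∈ v :: l ∧ ∃ i, some i ∈ v :: l ∧ some (i + 1) ∈ v :: l ∧ DirTri E i
  · exact Or.inl hT
  refine Or.inr ?_
  have hT' : none ∈ v :: l → ∀ i, some i ∈ v :: l → some (i + 1) ∈ v :: l → ¬ DirTri E i :=
    fun hn i h1 h2 h3 => hT ⟨hn, i, h1, h2, h3⟩
  obtain ⟨i, hi, hh⟩ : ∃ i, some i ∈ v :: l ∧ (none ∈ v :: l → E none (some i)) := by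
    by_cases hn : none ∈ v :: l
    · obtain ⟨y, hy, hEy⟩ := hout _ hn
      rcases y with _ | i
      · exact absurd hEy hE.not_loop
      · exact ⟨i, hy, fun _ => hEy⟩
    · rcases v with _ | i
      · simp at hn
      · exact ⟨i, by simp, fun h => absurd h hn⟩
  obtain ⟨y, hy, hEy⟩ := hout _ hi
  rcases y with _ | m
  · exact absurd hEy (hE.asymm (hh hy))
  rcases hE.rim hEy with rfl | rfl
  · have W := rim_walk hE {x | x ∈ v :: l} hout hT' (Or.inl rfl) hi hy hh hEy
    have key : ∀ j, i + (((j - i).val : ℕ) : ZMod k) * 1 = j := fun j => by simp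
    refine ⟨fun j => ?_, Or.inl fun j => ?_⟩
    · have := (W (j - i).val).1
      rwa [key] at this
    · have := (W (j - i).val).2.2.2
      rwa [key] at this
  · have e : m + 1 + -1 = m := by ring
    have W := rim_walk hE {x | x ∈ v :: l} hout hT' (d := -1) (Or.inr rfl) hi
      (by rw [e]; exact hy) hh (by rw [e]; exact hEy)
    have key : ∀ j, m + 1 + (((m + 1 - j).val : ℕ) : ZMod k) * -1 = j := fun j => by simp
    refine ⟨fun j => ?_, Or.inr fun j => ?_⟩
    · have := (W (m + 1 - j).val).1
      rwa [key] at this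
    · have := (W (m + 1 - (j + 1)).val).2.2.2
      rw [key] at this
      simpa using this

lemma triangle_isDicycle (hk : 2 ≤ k) {i : ZMod k} (h1 : E none (some i))
    (h2 : E (some i) (some (i + 1))) (h3 : E (some (i + 1)) none) :
    IsDicycle E none [some i, some (i + 1)] := by
  have : Fact (1 < k) := ⟨hk⟩
  constructor
  · simp
  · simp [List.Chain, h1, h2, h3]

/-- The dicycle is listed as `0, 1, …, k - 1`. -/
lemma rim_isDicycle [NeZero k] (h : ∀ i, E (some i) (some (i + 1))) :
    ∃ v l, IsDicycle E v l ∧ none ∉ v :: l := by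
  obtain ⟨m, rfl⟩ : ∃ m, k = m + 1 := ⟨k - 1, by have := NeZero.pos k; omega⟩
  let f : ℕ → Option (ZMod (m + 1)) := fun t => some (t : ZMod (m + 1))
  have e1 : some 0 :: (List.range m).map (fun t => f (t + 1)) = (List.range (m + 1)).map f := by
    rw [List.range_succ_eq_map]
    simp [f, Function.comp_def]
  have hf0 : f (m + 1) = some 0 := by simp [f]
  refine ⟨some 0, (List.range m).map (fun t => f (t + 1)), ⟨?_, ?_⟩, ?_⟩
  · rw [e1]
    refine (List.nodup_map_iff_inj_on List.nodup_range).2 fun a ha b hb hab => ?_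
    rw [List.mem_range] at ha hb
    have hab' : (a : ZMod (m + 1)) = b := by simpa only [f, Option.some.injEq] using hab
    have := (ZMod.natCast_eq_natCast_iff' a b (m + 1)).1 hab'
    rwa [Nat.mod_eq_of_lt ha, Nat.mod_eq_of_lt hb] at this
  · have e2 : some 0 :: ((List.range m).map (fun t => f (t + 1)) ++ [some 0])
        = (List.range (m + 2)).map f := by
      rw [List.range_succ (n := m + 1), List.map_append, ← e1, ← hf0]
      simp
    unfold List.Chain
    rw [e2, List.isChain_map, List.isChain_range]
    intro t _
    simpa [f] using h t
  · simp [f]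

end Orientation

/-! ### The extremal orientation -/

/-- The orientation of the wheel with a directed rim whose hub has arcs to the even rim vertices
and from the odd ones. Parity is measured by a ring homomorphism `π : ZMod k →+* ZMod 2`, which
exists when `k` is even. -/
def extremal {k : ℕ} (π : ZMod k →+* ZMod 2) : Option (ZMod k) → Option (ZMod k) → Prop :=
  fun a b => match a, b with
  | none, some i => π i = 0
  | some i, none => π i = 1
  | some i, some j => j = i + 1
  | none, none => False

lemma zmod_two (a : ZMod 2) : a = 0 ∨ a = 1 := by revert a; decide

lemma zmod_two_ne (a : ZMod 2) : a + 1 ≠ a := by revert a; decide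

lemma extremal_isOrientation {k : ℕ} (hk : 4 ≤ k) (π : ZMod k →+* ZMod 2) :
    IsOrientation (wheelGraph k) (extremal π) := by
  have : Fact (1 < k) := ⟨by omega⟩
  rintro (_ | i) (_ | j)
  · simp [extremal]
  · have : (wheelGraph k).Adj none (some j) := wheel_adj_hub j
    rcases zmod_two (π j) with h | h <;> simp [extremal, this, h]
  · have : (wheelGraph k).Adj (some i) none := (wheel_adj_hub i).symm
    rcases zmod_two (π i) with h | h <;> simp [extremal, this, h]
  · rw [wheel_adj_rim]
    constructor
    · simp only [extremal]
      constructor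
      · intro h
        refine ⟨?_, h⟩
        rintro rfl
        simp at h
      · exact fun h => h.2
    · rintro ⟨h1, h2⟩
      simp only [extremal] at h1 h2
      have h3 : ((2 : ℕ) : ZMod k) = 0 := by
        have : i + 2 = i + 0 := by rw [add_zero]; nth_rewrite 2 [h2]; rw [h1]; ring
        exact_mod_cast add_left_cancel this
      have := Nat.le_of_dvd (by norm_num) ((ZMod.natCast_eq_zero_iff 2 k).1 h3)
      omega

lemma extremal_triangle {k : ℕ} (hk : 4 ≤ k) (π : ZMod k →+* ZMod 2) {i : ZMod k}
    (hi : π i = 0) : IsDicycle (extremal π) none [some i, some (i + 1)] :=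
  triangle_isDicycle (by omega) hi rfl (by simp [extremal, hi])

/-! ### The star dichromatic number -/

/-- The colour `m / 3` on the circle of length `5 / 3`. -/
noncomputable def thirdColour (m : ℤ) : AddCircle (5 / 3 : ℝ) :=
  ((m / 3 : ℝ) : AddCircle (5 / 3 : ℝ))

/-- Scaling by `3` turns the colours into residues modulo `5` and unit arcs into arcs of
length `3`. -/
lemma thirdColour_mem {m : ℤ} {a : ℝ} (h : thirdColour m ∈ unitArc (5 / 3) a) :
    ∃ n : ℤ, 3 * a < ((m + 5 * n : ℤ) : ℝ) ∧ ((m + 5 * n : ℤ) : ℝ) < 3 * a + 3 := by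
  obtain ⟨x, hx, hxm⟩ := h
  have h0 : ((x - m / 3 : ℝ) : AddCircle (5 / 3 : ℝ)) = 0 := by
    rw [AddCircle.coe_sub, sub_eq_zero]
    exact hxm
  obtain ⟨n, hn⟩ := (AddCircle.coe_eq_zero_iff _).1 h0
  rw [zsmul_eq_mul] at hn
  have hx1 := hx.1
  have hx2 := hx.2
  refine ⟨n, ?_, ?_⟩ <;> push_cast <;> linarith

lemma int_close {a : ℝ} {y z : ℤ} (hy : a < y) (hz : (z : ℝ) < a + 3) : z - y < 3 := by
  have : ((z - y : ℤ) : ℝ) < (3 : ℤ) := by push_cast; linarith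
  exact_mod_cast this

/-- The colour pairs that may be used on the two rim vertices of a directed triangle. -/
def GoodPair (x y : ℤ) : Prop :=
  (x = 1 ∧ y = 3) ∨ (x = 3 ∧ y = 1) ∨ (x = 2 ∧ y = 4)

lemma not_mem_arc_of_goodPair {x y : ℤ} (h : GoodPair x y) {a : ℝ}
    (h0 : thirdColour 0 ∈ unitArc (5 / 3) a) (hx : thirdColour x ∈ unitArc (5 / 3) a)
    (hy : thirdColour y ∈ unitArc (5 / 3) a) : False := by
  obtain ⟨n0, l0, u0⟩ := thirdColour_mem h0
  obtain ⟨nx, lx, ux⟩ := thirdColour_mem hx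
  obtain ⟨ny, ly, uy⟩ := thirdColour_mem hy
  have := int_close l0 ux
  have := int_close l0 uy
  have := int_close lx u0
  have := int_close lx uy
  have := int_close ly u0
  have := int_close ly ux
  rcases h with ⟨rfl, rfl⟩ | ⟨rfl, rfl⟩ | ⟨rfl, rfl⟩ <;> omega

lemma not_mem_arc_rim {a : ℝ}
    (h1 : thirdColour 1 ∈ unitArc (5 / 3) a) (h2 : thirdColour 2 ∈ unitArc (5 / 3) a)
    (h4 : thirdColour 4 ∈ unitArc (5 / 3) a) : False := by
  obtain ⟨n1, l1, u1⟩ := thirdColour_mem h1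
  obtain ⟨n2, l2, u2⟩ := thirdColour_mem h2
  obtain ⟨n4, l4, u4⟩ := thirdColour_mem h4
  have := int_close l1 u2
  have := int_close l1 u4
  have := int_close l2 u1
  have := int_close l2 u4
  have := int_close l4 u1
  have := int_close l4 u2
  omega

section Star

variable {k : ℕ} {E : Option (ZMod k) → Option (ZMod k) → Prop}

lemma isAcyclicColouring_of_rim [NeZero k] (hE : IsOrientation (wheelGraph k) E)
    (m : ZMod k → ℤ) (hT : ∀ i, DirTri E i → GoodPair (m i) (m (i + 1)))
    (hR : ((∀ i, E (some i) (some (i + 1))) ∨ ∀ i, E (some (i + 1)) (some i)) →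
      (∃ i, m i = 1) ∧ (∃ i, m i = 2) ∧ ∃ i, m i = 4) :
    IsAcyclicColouring E (5 / 3) (fun v => thirdColour (v.elim 0 m)) := by
  intro a v l hcyc hA
  rcases dicycle_cases hE hcyc with ⟨hn, i, hi, hi', ht⟩ | ⟨hall, hdir⟩
  · exact not_mem_arc_of_goodPair (hT i ht) (hA _ hn) (hA _ hi) (hA _ hi')
  · obtain ⟨⟨i1, h1⟩, ⟨i2, h2⟩, i4, h4⟩ := hR hdir
    have g1 : thirdColour (m i1) ∈ unitArc (5 / 3) a := hA _ (hall i1)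
    have g2 : thirdColour (m i2) ∈ unitArc (5 / 3) a := hA _ (hall i2)
    have g4 : thirdColour (m i4) ∈ unitArc (5 / 3) a := hA _ (hall i4)
    rw [h1] at g1
    rw [h2] at g2
    rw [h4] at g4
    exact not_mem_arc_rim g1 g2 g4

lemma map_add_one (π : ZMod k →+* ZMod 2) (i : ZMod k) : π (i + 1) = π i + 1 := by simp

/-- On a directed rim two consecutive triangles are not both directed. -/
lemma not_dirTri_succ (hE : IsOrientation (wheelGraph k) E)
    (hdir : (∀ i, E (some i) (some (i + 1))) ∨ ∀ i, E (some (i + 1)) (some i)) {i : ZMod k}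
    (h : DirTri E i) : ¬ DirTri E (i + 1) := by
  intro h'
  rcases hdir with hd | hd
  · rcases h with h | h
    · rcases h' with h' | h'
      · exact hE.asymm h.2.2 h'.1
      · exact hE.asymm (hd _) h'.2.1
    · exact hE.asymm (hd _) h.2.1
  · rcases h with h | h
    · exact hE.asymm (hd _) h.2.1
    · rcases h' with h' | h'
      · exact hE.asymm (hd _) h'.2.1
      · exact hE.asymm h.1 h'.2.2

lemma natCast_ne_zero_of_lt {n : ℕ} (h0 : 0 < n) (h : n < k) : (n : ZMod k) ≠ 0 := fun hn =>
  absurd (Nat.le_of_dvd h0 ((ZMod.natCast_eq_zero_iff n k).1 hn)) (by omega)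

lemma exists_colouring [NeZero k] (hk : 4 ≤ k) (π : ZMod k →+* ZMod 2)
    (hE : IsOrientation (wheelGraph k) E) :
    ∃ c : Option (ZMod k) → AddCircle (5 / 3 : ℝ), IsAcyclicColouring E (5 / 3) c := by
  have n1 : (1 : ZMod k) ≠ 0 := by exact_mod_cast natCast_ne_zero_of_lt (n := 1) one_pos (by omega)
  have n2 : (2 : ZMod k) ≠ 0 := by exact_mod_cast natCast_ne_zero_of_lt (n := 2) two_pos (by omega)
  by_cases hdir : (∀ i, E (some i) (some (i + 1))) ∨ ∀ i, E (some (i + 1)) (some i)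
  · -- The pair `t, t + 1` is recoloured by `2, 4`; its neighbouring triangles are not directed.
    obtain ⟨t, ht1, ht2⟩ : ∃ t : ZMod k, ¬ DirTri E (t - 1) ∧ ¬ DirTri E (t + 1) := by
      by_cases h : ∃ t, DirTri E t
      · obtain ⟨t, ht⟩ := h
        refine ⟨t, fun h' => ?_, not_dirTri_succ hE hdir ht⟩
        have := not_dirTri_succ hE hdir h'
        rw [sub_add_cancel] at this
        exact this ht
      · exact ⟨0, fun h' => h ⟨_, h'⟩, fun h' => h ⟨_, h'⟩⟩
    let m : ZMod k → ℤ := fun j =>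
      if j = t then 2 else if j = t + 1 then 4 else if π j = π t then 1 else 3
    refine ⟨_, isAcyclicColouring_of_rim hE m ?_ ?_⟩
    · intro i hi
      have hi1 : i ≠ t + 1 := by rintro rfl; exact ht2 hi
      have hi2 : i + 1 ≠ t := by rintro rfl; rw [add_sub_cancel_right] at ht1; exact ht1 hi
      by_cases hit : i = t
      · subst hit
        refine Or.inr (Or.inr ⟨by simp [m], by simp [m, n1]⟩)
      · have hi3 : i + 1 ≠ t + 1 := fun h => hit (add_right_cancel h)
        simp only [GoodPair, m, hit, hi1, hi2, hi3, if_false, map_add_one]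
        generalize π i = x
        generalize π t = y
        revert x y
        decide
    · intro _
      refine ⟨⟨t + 2, ?_⟩, ⟨t, by simp [m]⟩, ⟨t + 1, by simp [m, n1]⟩⟩
      have e1 : t + 2 ≠ t := by simpa using n2
      have e2 : t + 2 ≠ t + 1 := fun h => n1 <| by
        have := add_left_cancel h
        calc (1 : ZMod k) = 2 - 1 := by ring
          _ = 0 := by rw [this]; ring
      have e3 : π (t + 2) = π t := by
        rw [show t + 2 = t + 1 + 1 by ring, map_add_one, map_add_one]
        generalize π t = y
        revert y
        decide
      simp [m, e1, e2, e3]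
  · refine ⟨_, isAcyclicColouring_of_rim hE (fun j => if π j = 0 then 1 else 3) ?_
      fun h => absurd h hdir⟩
    intro i _
    simp only [GoodPair, map_add_one]
    generalize π i = x
    revert x
    decide

lemma mem_unitArc {p s x : ℝ} {y : AddCircle p} (h : (x : AddCircle p) = y) (h1 : s < x)
    (h2 : x < s + 1) : y ∈ unitArc p s := ⟨x, ⟨h1, h2⟩, h⟩

/-- If the points `h`, `h + a`, `h + b` of a circle of length `p` lie in no common open unit arc,
then all three gaps between them are at most `p - 1`, which confines `a` and `b`. -/
lemma gap_bounds {p h a b : ℝ} (ha : 0 ≤ a) (hab : a ≤ b) (hb : b < p)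
    (H : ∀ s, ((h : ℝ) : AddCircle p) ∈ unitArc p s → ((h + a : ℝ) : AddCircle p) ∈ unitArc p s →
      ((h + b : ℝ) : AddCircle p) ∈ unitArc p s → False) : 2 - p ≤ a ∧ b ≤ 2 * p - 2 := by
  have h1 : 1 ≤ b := by
    by_contra! hlt
    exact H (h + (b - 1) / 2) (mem_unitArc rfl (by linarith) (by linarith))
      (mem_unitArc rfl (by linarith) (by linarith)) (mem_unitArc rfl (by linarith) (by linarith))
  have h2 : a ≤ p - 1 := by
    by_contra! hlt
    exact H (h + (a + p - 1) / 2)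
      (mem_unitArc (AddCircle.coe_add_period p h) (by linarith) (by linarith))
      (mem_unitArc rfl (by linarith) (by linarith)) (mem_unitArc rfl (by linarith) (by linarith))
  have h3 : b - a ≤ p - 1 := by
    by_contra! hlt
    exact H (h + (b + (p + a) - 1) / 2)
      (mem_unitArc (AddCircle.coe_add_period p h) (by linarith) (by linarith))
      (mem_unitArc (AddCircle.coe_add_period p (h + a)) (by linarith) (by linarith))
      (mem_unitArc rfl (by linarith) (by linarith))
  constructor <;> linarith

lemma extremal_star_lower [NeZero k] (hk : 4 ≤ k) (π : ZMod k →+* ZMod 2) {p : ℝ} (hp : 1 ≤ p)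
    {c : Option (ZMod k) → AddCircle p} (hc : IsAcyclicColouring (extremal π) p c) :
    5 / 3 ≤ p := by
  by_contra! hlt
  have : Fact (0 < p) := ⟨by linarith⟩
  have hrep : ∀ y : AddCircle p, ∃ x : ℝ, (0 ≤ x ∧ x < p) ∧ (x : AddCircle p) = y := by
    intro y
    have hy : y ∈ (QuotientAddGroup.mk '' Set.Ico (0 : ℝ) (0 + p) : Set (AddCircle p)) := by
      rw [AddCircle.coe_image_Ico_eq]; trivial
    obtain ⟨x, hx, rfl⟩ := hy
    exact ⟨x, ⟨hx.1, by simpa using hx.2⟩, rfl⟩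
  obtain ⟨h, -, hh⟩ := hrep (c none)
  choose r hr hrc using fun i => hrep (c (some i) - c none)
  have hcol : ∀ i, ((h + r i : ℝ) : AddCircle p) = c (some i) := by
    intro i
    rw [AddCircle.coe_add, hh, hrc]
    abel
  have hpair : ∀ i, π i = 0 → (2 - p ≤ r i ∧ r i ≤ 2 * p - 2) ∧
      (2 - p ≤ r (i + 1) ∧ r (i + 1) ≤ 2 * p - 2) := by
    intro i hi
    have H : ∀ s, c none ∈ unitArc p s → c (some i) ∈ unitArc p s →
        c (some (i + 1)) ∈ unitArc p s → False := by
      intro s h0 h1 h2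
      refine hc s _ _ (extremal_triangle hk π hi) ?_
      intro x hx
      simp only [List.mem_cons, List.not_mem_nil, or_false] at hx
      rcases hx with rfl | rfl | rfl
      exacts [h0, h1, h2]
    rcases le_total (r i) (r (i + 1)) with hle | hle
    · obtain ⟨g1, g2⟩ := gap_bounds (p := p) (h := h) (hr i).1 hle (hr (i + 1)).2 (by
        simpa only [hh, hcol] using H)
      exact ⟨⟨g1, by linarith⟩, by linarith, g2⟩
    · obtain ⟨g1, g2⟩ := gap_bounds (p := p) (h := h) (hr (i + 1)).1 hle (hr i).2 (by
        intro s h0 h1 h2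
        rw [hh] at h0
        rw [hcol] at h1 h2
        exact H s h0 h2 h1)
      exact ⟨⟨by linarith, g2⟩, g1, by linarith⟩
  have hall : ∀ i, 2 - p ≤ r i ∧ r i ≤ 2 * p - 2 := by
    intro i
    rcases zmod_two (π i) with hi | hi
    · exact (hpair i hi).1
    · have := (hpair (i - 1) (by rw [map_sub, hi, map_one, sub_self])).2
      rwa [sub_add_cancel] at this
  obtain ⟨v, l, hcyc, hn⟩ := rim_isDicycle (E := extremal π) fun i => rfl
  refine hc (h + p / 2 - 1 / 2) v l hcyc fun x hx => ?_
  rcases x with _ | i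
  · exact absurd hx hn
  · have := hall i
    exact mem_unitArc (hcol i) (by linarith) (by linarith)

end Star

lemma starDichromatic_le {E : V → V → Prop} {p : ℝ} (hp : 1 ≤ p) (c : V → AddCircle p)
    (hc : IsAcyclicColouring E p c) : starDichromatic E ≤ p :=
  csInf_le ⟨1, fun _ h => h.1⟩ ⟨hp, c, hc⟩

lemma starDichromaticGraph_wheel (k : ℕ) [NeZero k] (hk : 4 ≤ k) (π : ZMod k →+* ZMod 2) :
    starDichromaticGraph (wheelGraph k) = 5 / 3 := by
  have hle : ∀ E, IsOrientation (wheelGraph k) E → starDichromatic E ≤ 5 / 3 := by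
    intro E hE
    obtain ⟨c, hc⟩ := exists_colouring hk π hE
    exact starDichromatic_le (by norm_num) c hc
  have hO := extremal_isOrientation hk π
  refine IsGreatest.csSup_eq ⟨⟨extremal π, hO, le_antisymm ?_ (hle _ hO)⟩, ?_⟩
  · obtain ⟨c, hc⟩ := exists_colouring hk π hO
    refine le_csInf ⟨5 / 3, by norm_num, c, hc⟩ ?_
    rintro p ⟨hp, c, hc⟩
    exact extremal_star_lower hk π hp hc
  · rintro r ⟨E, hE, rfl⟩
    exact hle E hE

/-! ### The fractional dichromatic number -/

/-- The feasible values of the linear program defining `fracDichromatic`. -/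
def fracValues [Fintype V] [DecidableEq V] (E : V → V → Prop) : Set ℝ :=
  {r : ℝ | ∃ x : Finset V → ℝ, (∀ A, 0 ≤ x A) ∧
    (∀ A : Finset V, x A ≠ 0 → AcyclicOn E ↑A) ∧
    (∀ v : V, 1 ≤ ∑ A ∈ Finset.univ.filter (fun A : Finset V => v ∈ A), x A) ∧
    r = ∑ A : Finset V, x A}

/-- A weighted indexed family of acyclic sets that covers every vertex is a feasible solution of
the covering program. -/
lemma sum_mem_fracValues [Fintype V] [DecidableEq V] {E : V → V → Prop} {ι : Type*} [Fintype ι]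
    (S : ι → Finset V) (w : ι → ℝ) (hw : ∀ i, 0 ≤ w i) (hS : ∀ i, AcyclicOn E (S i : Set V))
    (hcov : ∀ v, 1 ≤ ∑ i, if v ∈ S i then w i else 0) : ∑ i, w i ∈ fracValues E := by
  classical
  refine ⟨fun A => ∑ i with S i = A, w i, fun A => sum_nonneg fun i _ => hw i, ?_, ?_, ?_⟩
  · intro A hA
    obtain ⟨i, hi, -⟩ := exists_ne_zero_of_sum_ne_zero hA
    rw [mem_filter] at hi
    rw [← hi.2]
    exact hS i
  · intro v
    refine (hcov v).trans (le_of_eq ?_)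
    rw [sum_filter, ← sum_fiberwise univ S]
    refine sum_congr rfl fun A _ => ?_
    by_cases hv : v ∈ A
    · rw [if_pos hv]
      refine sum_congr rfl fun i hi => ?_
      rw [(mem_filter.1 hi).2, if_pos hv]
    · rw [if_neg hv]
      refine sum_eq_zero fun i hi => ?_
      rw [(mem_filter.1 hi).2, if_neg hv]
  · exact (sum_fiberwise univ S w).symm

/-- Weak duality for the covering program. -/
lemma dual_le_of_mem_fracValues [Fintype V] [DecidableEq V] {E : V → V → Prop} (y : V → ℝ)
    (hy : ∀ v, 0 ≤ y v) (hdual : ∀ A : Finset V, AcyclicOn E (A : Set V) → ∑ v ∈ A, y v ≤ 1)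
    {r : ℝ} (hr : r ∈ fracValues E) : ∑ v, y v ≤ r := by
  obtain ⟨x, hx, hac, hcov, rfl⟩ := hr
  calc ∑ v, y v ≤ ∑ v, y v * ∑ A : Finset V with v ∈ A, x A :=
        sum_le_sum fun v _ => le_mul_of_one_le_right (hy v) (hcov v)
    _ = ∑ A : Finset V, x A * ∑ v ∈ A, y v := by
        simp_rw [mul_sum, sum_filter]
        rw [sum_comm]
        refine sum_congr rfl fun A _ => ?_
        rw [← sum_filter, filter_univ_mem]
        exact sum_congr rfl fun v _ => mul_comm _ _
    _ ≤ ∑ A : Finset V, x A := by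
        refine sum_le_sum fun A _ => ?_
        by_cases h0 : x A = 0
        · simp [h0]
        · exact mul_le_of_le_one_right (hx A) (hdual A (hac A h0))

section Frac

variable {k : ℕ} [NeZero k]

/-- The acyclic sets of the fractional cover: the hub with one parity class of the rim, and the
rim without one vertex. -/
def coverSet (π : ZMod k →+* ZMod 2) : ZMod 2 ⊕ ZMod k → Finset (Option (ZMod k))
  | Sum.inl b => univ.filter fun x => ∀ i, x = some i → π i = b
  | Sum.inr j => univ.filter fun x => x ≠ none ∧ x ≠ some j

lemma coverSet_acyclic {E : Option (ZMod k) → Option (ZMod k) → Prop} (π : ZMod k →+* ZMod 2)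
    (hE : IsOrientation (wheelGraph k) E) (s : ZMod 2 ⊕ ZMod k) :
    AcyclicOn E (coverSet π s : Set (Option (ZMod k))) := by
  have hpar : ∀ i b, π i = b → π (i + 1) = b → False := by
    rintro i b h1 h2
    rw [map_add_one, h1] at h2
    exact zmod_two_ne b h2
  intro v l hcyc hA
  rcases s with b | j
  · have hb : ∀ i, some i ∈ v :: l → π i = b := by
      intro i hi
      have := hA _ hi
      simpa [coverSet] using this
    rcases dicycle_cases hE hcyc with ⟨-, i, hi, hi', -⟩ | ⟨hall, -⟩
    · exact hpar i b (hb _ hi) (hb _ hi')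
    · exact hpar 0 b (hb _ (hall _)) (hb _ (hall _))
  · rcases dicycle_cases hE hcyc with ⟨hn, -⟩ | ⟨hall, -⟩
    · simpa [coverSet] using hA _ hn
    · simpa [coverSet] using hA _ (hall j)

lemma value_eq (hk : 4 ≤ k) : (3 * (k : ℝ) - 2) / (2 * (k : ℝ) - 2) =
    2 * (1 / 2) + k * (1 / (2 * ((k : ℝ) - 1))) := by
  have h : (4 : ℝ) ≤ k := by exact_mod_cast hk
  have h1 : (k : ℝ) - 1 ≠ 0 := by linarith
  have h2 : 2 * (k : ℝ) - 2 ≠ 0 := by linarith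
  field_simp
  ring

lemma value_mem_fracValues {E : Option (ZMod k) → Option (ZMod k) → Prop} (hk : 4 ≤ k)
    (π : ZMod k →+* ZMod 2) (hE : IsOrientation (wheelGraph k) E) :
    (3 * (k : ℝ) - 2) / (2 * (k : ℝ) - 2) ∈ fracValues E := by
  have h : (4 : ℝ) ≤ k := by exact_mod_cast hk
  have h1 : 0 < (k : ℝ) - 1 := by linarith
  have key := sum_mem_fracValues (coverSet π)
    (Sum.elim (fun _ => 1 / 2) fun _ => 1 / (2 * ((k : ℝ) - 1))) ?_ (coverSet_acyclic π hE) ?_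
  · rw [Fintype.sum_sum_type] at key
    simpa [value_eq hk, ZMod.card] using key
  · rintro (b | j)
    · simp
    · simp only [Sum.elim_inr]; positivity
  · rintro (_ | i)
    · rw [Fintype.sum_sum_type]
      simp [coverSet, ZMod.card]
    · have e1 : (∑ b : ZMod 2, if some i ∈ coverSet π (Sum.inl b) then (1 / 2 : ℝ) else 0)
          = 1 / 2 := by
        simp [coverSet]
      have e2 : (∑ j : ZMod k, if some i ∈ coverSet π (Sum.inr j) then 1 / (2 * ((k : ℝ) - 1))
          else 0) = 1 / 2 := by
        have : ∀ j : ZMod k, (if some i ∈ coverSet π (Sum.inr j) then 1 / (2 * ((k : ℝ) - 1))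
            else 0) = 1 / (2 * ((k : ℝ) - 1)) - if i = j then 1 / (2 * ((k : ℝ) - 1)) else 0 := by
          intro j
          by_cases hij : i = j <;> simp [coverSet, hij]
        simp_rw [this]
        rw [sum_sub_distrib, sum_ite_eq]
        simp only [sum_const, card_univ, ZMod.card, mem_univ, if_true, nsmul_eq_mul]
        field_simp
      rw [Fintype.sum_sum_type]
      simp only [Sum.elim_inl, Sum.elim_inr]
      rw [e1, e2]
      norm_num

/-- The other vertex of the matching pair `{i, i + 1}`, `i` even, that contains a rim vertex. -/
def mate (π : ZMod k →+* ZMod 2) (i : ZMod k) : ZMod k := if π i = 0 then i + 1 else i - 1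

lemma mate_involutive (π : ZMod k →+* ZMod 2) : Function.Involutive (mate π) := by
  intro i
  rcases zmod_two (π i) with h | h <;> simp [mate, h]

/-- The dual constraint for the extremal orientation. -/
lemma extremal_dual (hk : 4 ≤ k) (π : ZMod k →+* ZMod 2) (A : Finset (Option (ZMod k)))
    (hA : AcyclicOn (extremal π) (A : Set (Option (ZMod k)))) :
    ∑ v ∈ A, v.elim (1 - k * (1 / (2 * ((k : ℝ) - 1)))) (fun _ => 1 / ((k : ℝ) - 1)) ≤ 1 := by
  have h : (4 : ℝ) ≤ k := by exact_mod_cast hk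
  have h1 : 0 < (k : ℝ) - 1 := by linarith
  have hsum : ∑ v ∈ A, v.elim (1 - k * (1 / (2 * ((k : ℝ) - 1)))) (fun _ => 1 / ((k : ℝ) - 1)) =
      (if none ∈ A then 1 - k * (1 / (2 * ((k : ℝ) - 1))) else 0) +
        (∑ i : ZMod k, if some i ∈ A then (1 : ℝ) else 0) * (1 / ((k : ℝ) - 1)) := by
    rw [← filter_univ_mem A, sum_filter, Fintype.sum_option, sum_mul]
    simp
  rw [hsum]
  by_cases hn : none ∈ A
  · have hpair : ∀ i, π i = 0 → some i ∈ A → some (i + 1) ∈ A → False := by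
      intro i hi h1 h2
      refine hA _ _ (extremal_triangle hk π hi) ?_
      intro x hx
      simp only [List.mem_cons, List.not_mem_nil, or_false] at hx
      rcases hx with rfl | rfl | rfl
      exacts [hn, h1, h2]
    have hmate : ∀ i, (if some i ∈ A then (1 : ℝ) else 0) +
        (if some (mate π i) ∈ A then (1 : ℝ) else 0) ≤ 1 := by
      intro i
      have : ¬ (some i ∈ A ∧ some (mate π i) ∈ A) := by
        rintro ⟨g1, g2⟩
        rcases zmod_two (π i) with hi | hi
        · exact hpair i hi g1 (by simpa [mate, hi] using g2)
        · refine hpair (i - 1) (by rw [map_sub, hi, map_one, sub_self]) ?_ (by simpa using g1)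
          simpa [mate, hi] using g2
      split_ifs <;> first | tauto | norm_num
    have hs := sum_le_sum fun i (_ : i ∈ (univ : Finset (ZMod k))) => hmate i
    have hperm : ∑ i, (if some (mate π i) ∈ A then (1 : ℝ) else 0) =
        ∑ i, if some i ∈ A then (1 : ℝ) else 0 :=
      Equiv.sum_comp (mate_involutive π).toPerm fun i => if some i ∈ A then (1 : ℝ) else 0
    rw [sum_add_distrib, hperm] at hs
    simp only [sum_const, card_univ, ZMod.card, nsmul_eq_mul, mul_one] at hs
    rw [if_pos hn]
    generalize (∑ i : ZMod k, if some i ∈ A then (1 : ℝ) else 0) = N at hs ⊢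
    have : N * (1 / ((k : ℝ) - 1)) ≤ k / 2 * (1 / ((k : ℝ) - 1)) :=
      mul_le_mul_of_nonneg_right (by linarith) (by positivity)
    have e : (k : ℝ) / 2 * (1 / ((k : ℝ) - 1)) = k * (1 / (2 * ((k : ℝ) - 1))) := by
      field_simp
    linarith
  · obtain ⟨j, hj⟩ : ∃ j, some j ∉ A := by
      by_contra! hall
      obtain ⟨v, l, hcyc, hv⟩ := rim_isDicycle (E := extremal π) fun i => rfl
      refine hA v l hcyc fun x hx => ?_
      rcases x with _ | i
      · exact absurd hx hv
      · exact hall i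
    have hN : (∑ i : ZMod k, if some i ∈ A then (1 : ℝ) else 0) ≤ k - 1 := by
      calc (∑ i : ZMod k, if some i ∈ A then (1 : ℝ) else 0)
          ≤ ∑ i : ZMod k, ((1 : ℝ) - if j = i then 1 else 0) := by
            refine sum_le_sum fun i _ => ?_
            by_cases hij : j = i
            · subst hij; simp [hj]
            · simp only [hij, if_false, sub_zero]; split_ifs <;> norm_num
        _ = k - 1 := by rw [sum_sub_distrib, sum_ite_eq]; simp [ZMod.card]
    rw [if_neg hn, zero_add, mul_one_div, div_le_one h1]
    exact hN

lemma fracDichromaticGraph_wheel (hk : 4 ≤ k) (π : ZMod k →+* ZMod 2) :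
    fracDichromaticGraph (wheelGraph k) = (3 * (k : ℝ) - 2) / (2 * (k : ℝ) - 2) := by
  have h : (4 : ℝ) ≤ k := by exact_mod_cast hk
  have h1 : 0 < (k : ℝ) - 1 := by linarith
  have hle : ∀ E, IsOrientation (wheelGraph k) E →
      fracDichromatic E ≤ (3 * (k : ℝ) - 2) / (2 * (k : ℝ) - 2) := by
    intro E hE
    refine csInf_le ⟨0, ?_⟩ (value_mem_fracValues hk π hE)
    rintro r ⟨x, hx, -, -, rfl⟩
    exact sum_nonneg fun A _ => hx A
  have hO := extremal_isOrientation hk π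
  refine IsGreatest.csSup_eq ⟨⟨extremal π, hO, le_antisymm ?_ (hle _ hO)⟩, ?_⟩
  · refine le_csInf ⟨_, value_mem_fracValues hk π hO⟩ fun r hr => ?_
    have hd := dual_le_of_mem_fracValues _ ?_ (extremal_dual hk π) hr
    · refine le_trans (le_of_eq ?_) hd
      rw [Fintype.sum_option, value_eq hk]
      simp only [Option.elim_none, Option.elim_some, sum_const, card_univ, ZMod.card,
        nsmul_eq_mul]
      field_simp
      ring
    · rintro (_ | i)
      · simp only [Option.elim_none]
        rw [mul_one_div, sub_nonneg, div_le_one (by positivity)]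
        linarith
      · simp only [Option.elim_some]
        positivity
  · rintro r ⟨E, hE, rfl⟩
    exact hle E hE

end Frac

/-- for even `k ≥ 4`, the wheel satisfies `χ⃗*(W_k) = 5/3` while
`χ⃗_f(W_k) = (3k-2)/(2k-2)`. -/
theorem stmt19 (k : ℕ) [NeZero k] (hk : 4 ≤ k) (heven : Even k) :
    starDichromaticGraph (wheelGraph k) = 5 / 3 ∧
    fracDichromaticGraph (wheelGraph k) = (3 * (k : ℝ) - 2) / (2 * (k : ℝ) - 2) := by
  exact ⟨starDichromaticGraph_wheel k hk (ZMod.castHom heven.two_dvd (ZMod 2)),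
    fracDichromaticGraph_wheel hk (ZMod.castHom heven.two_dvd (ZMod 2))⟩
end
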